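/- Let p > 0. The functional K ↦ Ω_p(K) defined on convex bodies with 0 in the interior by Ω_p(K) = inf over positive continuous g : ∂K → ℝ of (∫_{∂K} g^{-n} dC₀(K,·))^{p/(n+p)} (∫_{∂K} g^p (h_K∘ν_K)^{1-p} dC_{n-1}(K,·))^{n/(n+p)} is upper semi-continuous with respect to the Hausdorff metric. -/

import Mathlib

open MeasureTheory Metric Set Filter
open scoped RealInnerProductSpace ENNReal NNReal Topology

noncomputable section

abbrev Euc (n : ℕ) := EuclideanSpace ℝ (Fin n)

def IsConvexBody {n : ℕ} (K : Set (Euc n)) : Prop :=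
  IsCompact K ∧ Convex ℝ K ∧ (interior K).Nonempty

def IsOuterNormalAt {n : ℕ} (K : Set (Euc n)) (u x : Euc n) : Prop :=
  x ∈ frontier K ∧ ∀ y ∈ K, ⟪y, u⟫ ≤ ⟪x, u⟫

open Classical in
/-- The Gauss map: at a regular boundary point, the unique outer unit normal. -/
def gaussMap {n : ℕ} (K : Set (Euc n)) (x : Euc n) : Euc n :=
  if h : ∃ u, ‖u‖ = 1 ∧ IsOuterNormalAt K u x then h.choose else 0

open Classical in
/-- The inverse Gauss map: at a regular normal vector, the unique boundary point
with that outer normal. -/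
def gaussMapInv {n : ℕ} (K : Set (Euc n)) (u : Euc n) : Euc n :=
  if h : ∃ x, IsOuterNormalAt K u x then h.choose else 0

/-- The (n-1)-th curvature measure: (n-1)-dimensional Hausdorff measure on the boundary. -/
def bdryMeasure (n : ℕ) (K : Set (Euc n)) : Measure (Euc n) :=
  (Measure.hausdorffMeasure ((n : ℝ) - 1)).restrict (frontier K)

/-- The 0-th curvature measure: C₀(K,β) = H^{n-1}(ν(K,β)), realized as the pushforward of
the spherical Hausdorff measure under the inverse Gauss map. -/
def curv0 (n : ℕ) (K : Set (Euc n)) : Measure (Euc n) :=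
  Measure.map (gaussMapInv K)
    ((Measure.hausdorffMeasure ((n : ℝ) - 1)).restrict (Metric.sphere (0 : Euc n) 1))

/-- The generalized Gauss curvature H_K, as density of C₀(K,·) w.r.t. C_{n-1}(K,·). -/
def gaussCurv (n : ℕ) (K : Set (Euc n)) : Euc n → ℝ≥0∞ :=
  Measure.rnDeriv (curv0 n K) (bdryMeasure n K)

/-- The surface area measure S_K, pushforward of boundary Hausdorff measure by the Gauss map. -/
def surfaceMeasure (n : ℕ) (K : Set (Euc n)) : Measure (Euc n) :=
  Measure.map (gaussMap K) (bdryMeasure n K)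

/-- The generalized curvature function F_K, as density of S_K w.r.t. spherical Hausdorff measure. -/
def curvFn (n : ℕ) (K : Set (Euc n)) : Euc n → ℝ≥0∞ :=
  Measure.rnDeriv (surfaceMeasure n K)
    ((Measure.hausdorffMeasure ((n : ℝ) - 1)).restrict (Metric.sphere (0 : Euc n) 1))

/-- The support function of K. -/
def suppFn {n : ℕ} (K : Set (Euc n)) (x : Euc n) : ℝ :=
  sSup ((fun y => ⟪y, x⟫) '' K)

/-- L_p affine surface area, via curvature measures: the infimum over positive continuous
functions g on the boundary. -/
def lpASA (n : ℕ) (p : ℝ) (K : Set (Euc n)) : ℝ≥0∞ :=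
  sInf {v : ℝ≥0∞ | ∃ g : Euc n → ℝ, ContinuousOn g (frontier K) ∧
    (∀ x ∈ frontier K, 0 < g x) ∧
    v = (∫⁻ x, ENNReal.ofReal (g x) ^ (-(n : ℝ)) ∂(curv0 n K)) ^ (p / (n + p)) *
        (∫⁻ x, ENNReal.ofReal (g x) ^ p *
          ENNReal.ofReal (suppFn K (gaussMap K x)) ^ (1 - p) ∂(bdryMeasure n K)) ^ ((n : ℝ) / (n + p))}

/-! ### Charts -/

/-- linear part of the chart -/
def chartL {m : ℕ} (i : Fin (m+1)) : (Fin m → ℝ) →L[ℝ] Euc (m+1) :=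
  ∑ j : Fin m, (ContinuousLinearMap.proj (R := ℝ) (φ := fun _ : Fin m => ℝ) j).smulRight
    (EuclideanSpace.single (i.succAbove j) (1:ℝ))

def chart {m : ℕ} (i : Fin (m+1)) (s : ℝ) (w : Fin m → ℝ) : Euc (m+1) :=
  s • EuclideanSpace.single i (1:ℝ) + chartL i w

lemma chartL_apply {m : ℕ} (i : Fin (m+1)) (w : Fin m → ℝ) :
    chartL i w = ∑ j, w j • EuclideanSpace.single (i.succAbove j) (1:ℝ) := by
  simp [chartL]

lemma chart_lip {m : ℕ} (i : Fin (m+1)) (s : ℝ) : ∃ C, LipschitzWith C (chart i s) := by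
  refine ⟨‖chartL i‖₊, ?_⟩
  refine LipschitzWith.of_dist_le_mul fun x y => ?_
  have := (chartL i).lipschitz.dist_le_mul x y
  simpa [chart] using this

lemma chart_coord_self {m : ℕ} (i : Fin (m+1)) (s : ℝ) (w : Fin m → ℝ) : (chart i s w) i = s := by
  simp [chart, chartL_apply, (Fin.succAbove_ne _ _).symm]

lemma chart_coord_succ {m : ℕ} (i : Fin (m+1)) (s : ℝ) (w : Fin m → ℝ) (j : Fin m) :
    (chart i s w) (i.succAbove j) = w j := by
  simp [chart, chartL_apply, Fin.succAbove_ne, Pi.single_apply]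

lemma chart_norm {m : ℕ} (i : Fin (m+1)) (s : ℝ) (hs : |s| = 1) (w : Fin m → ℝ) :
    1 ≤ ‖chart i s w‖ := by
  have := PiLp.norm_apply_le (chart i s w) i
  rw [chart_coord_self] at this
  rw [← hs]; exact this

lemma chart_cover {m : ℕ} (x : Euc (m+1)) (hx : x ≠ 0) :
    ∃ (i : Fin (m+1)) (s : ℝ) (t : ℝ) (w : Fin m → ℝ), (s = 1 ∨ s = -1) ∧ 0 < t ∧
      w ∈ closedBall (0 : Fin m → ℝ) 1 ∧ x = t • chart i s w := by
  obtain ⟨i, -, hi⟩ := Finset.exists_max_image Finset.univ (fun k => |x k|) Finset.univ_nonempty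
  have hxi : 0 < |x i| := by
    by_contra h
    apply hx
    ext k
    have h1 := hi k (Finset.mem_univ k)
    have h2 := abs_nonneg (x k)
    have : |x k| = 0 := by linarith
    simpa using this
  refine ⟨i, x i / |x i|, |x i|, fun j => x (i.succAbove j) / |x i|, ?_, hxi, ?_, ?_⟩
  · rcases abs_cases (x i) with h | h
    · left; rw [h.1]; rw [h.1] at hxi; field_simp
    · right; rw [h.1, div_neg, div_self h.2.ne]
  · rw [mem_closedBall_zero_iff, pi_norm_le_iff_of_nonneg zero_le_one]
    intro j
    rw [Real.norm_eq_abs, abs_div, abs_abs, div_le_one hxi]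
    exact hi _ (Finset.mem_univ _)
  · ext k
    rcases Fin.eq_self_or_eq_succAbove i k with h | ⟨j, h⟩
    · subst h
      rw [PiLp.smul_apply, chart_coord_self, smul_eq_mul]; field_simp
    · subst h
      rw [PiLp.smul_apply, chart_coord_succ, smul_eq_mul]; field_simp

lemma chart_unique {m : ℕ} (i : Fin (m+1)) (s : ℝ) (hs : s ≠ 0) (f : Euc (m+1) → ℝ) (w : Fin m → ℝ)
    (hd : DifferentiableAt ℝ (fun w => f (chart i s w)) w) (u v : Euc (m+1))
    (hu : ∀ z, ⟪z, u⟫ ≤ f z) (hv : ∀ z, ⟪z, v⟫ ≤ f z)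
    (hu' : ⟪chart i s w, u⟫ = f (chart i s w)) (hv' : ⟪chart i s w, v⟫ = f (chart i s w)) :
    u = v := by
  obtain ⟨ℓ, hℓ⟩ := hd
  have key : ∀ u : Euc (m+1), (∀ z, ⟪z, u⟫ ≤ f z) → ⟪chart i s w, u⟫ = f (chart i s w) →
      ∀ d, ⟪chartL i d, u⟫ = ℓ d := by
    intro u hu hu' d
    have h1 : HasDerivAt (fun t : ℝ => w + t • d) d 0 := by
      simpa using ((hasDerivAt_id (0:ℝ)).smul_const d).const_add w
    have h2 : HasDerivAt (fun t : ℝ => f (chart i s (w + t • d))) (ℓ d) 0 := by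
      have h3 : HasFDerivAt (fun w => f (chart i s w)) ℓ (w + (0:ℝ) • d) := by simpa using hℓ
      exact h3.comp_hasDerivAt (0:ℝ) h1
    have h4 : HasDerivAt (fun t : ℝ => t * ⟪chartL i d, u⟫) ⟪chartL i d, u⟫ 0 := by
      simpa using (hasDerivAt_id (0:ℝ)).mul_const ⟪chartL i d, u⟫
    have h5 := h2.sub h4
    have h6 : IsLocalMin ((fun t : ℝ => f (chart i s (w + t • d))) - (fun t : ℝ => t * ⟪chartL i d, u⟫)) 0 := by
      refine Filter.Eventually.of_forall fun t => ?_
      have e : chart i s (w + t • d) = chart i s w + t • chartL i d := by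
        simp [chart, add_assoc]
      have := hu (chart i s (w + t • d))
      have e2 : ⟪chart i s (w + t • d), u⟫ = f (chart i s w) + t * ⟪chartL i d, u⟫ := by
        rw [e, inner_add_left, hu', real_inner_smul_left]
      simp only [Pi.sub_apply, zero_smul, add_zero, zero_mul, sub_zero]
      linarith
    have := h6.hasDerivAt_eq_zero h5
    linarith
  have hL : ∀ d, ⟪chartL i d, u - v⟫ = 0 := by
    intro d; rw [inner_sub_right, key u hu hu' d, key v hv hv' d, sub_self]
  have hc : ⟪chart i s w, u - v⟫ = 0 := by rw [inner_sub_right, hu', hv', sub_self]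
  rw [chart, inner_add_left, hL, real_inner_smul_left, add_zero] at hc
  rw [← sub_eq_zero]
  ext k
  rcases Fin.eq_self_or_eq_succAbove i k with h | ⟨j, h⟩
  · subst h
    have := (mul_eq_zero.1 hc).resolve_left hs
    simpa [EuclideanSpace.inner_single_left] using this
  · subst h
    have := hL (Pi.single j 1)
    rw [chartL_apply, Finset.sum_eq_single j] at this
    · simpa [EuclideanSpace.inner_single_left] using this
    · intro b _ hb; simp [hb]
    · simp

/-- normalised chart -/
def nchart {m : ℕ} (q : Euc (m+1) → ℝ) (i : Fin (m+1)) (s : ℝ) (w : Fin m → ℝ) : Euc (m+1) :=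
  (q (chart i s w))⁻¹ • chart i s w

lemma nchart_lip {m : ℕ} (q : Euc (m+1) → ℝ) {Cq : ℝ≥0} (hq : LipschitzWith Cq q) (c : ℝ) (hc : 0 < c)
    (hqc : ∀ x, c * ‖x‖ ≤ q x) (i : Fin (m+1)) (s : ℝ) (hs : |s| = 1) :
    ∃ C, LipschitzWith C (nchart q i s) := by
  obtain ⟨C1, hC1⟩ := chart_lip i s
  refine ⟨(Real.toNNReal (c⁻¹ + c⁻¹ * c⁻¹ * Cq)) * C1, ?_⟩
  refine LipschitzWith.of_dist_le_mul fun a b => ?_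
  have h0 := hC1.dist_le_mul a b
  have ha := chart_norm i s hs a
  have hb := chart_norm i s hs b
  unfold nchart
  generalize chart i s a = x at *
  generalize chart i s b = y at *
  have hx := hqc x
  have hy := hqc y
  have hx0 : c ≤ q x := le_trans (by nlinarith) hx
  have hy0 : c ≤ q y := le_trans (by nlinarith) hy
  have hxp : 0 < q x := by linarith
  have hyp : 0 < q y := by linarith
  have hqq := hq.dist_le_mul x y
  have e : (q x)⁻¹ • x - (q y)⁻¹ • y = (q x)⁻¹ • (x - y) + ((q x)⁻¹ * (q y - q x)) • ((q y)⁻¹ • y) := by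
    rw [smul_smul, smul_sub, sub_add, ← sub_smul]
    congr 2
    field_simp
    ring
  have h1 : (q x)⁻¹ ≤ c⁻¹ := by gcongr
  have h2 : ‖(q y)⁻¹ • y‖ ≤ c⁻¹ := by
    rw [norm_smul, Real.norm_of_nonneg (by positivity), inv_mul_le_iff₀ hyp, ← div_eq_mul_inv, le_div_iff₀ hc]
    linarith
  have h3 : dist ((q x)⁻¹ • x) ((q y)⁻¹ • y) ≤ (c⁻¹ + c⁻¹ * c⁻¹ * Cq) * dist x y := by
    rw [dist_eq_norm, e]
    refine (norm_add_le _ _).trans ?_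
    rw [norm_smul, norm_smul _ ((q y)⁻¹ • y), norm_mul, Real.norm_of_nonneg (by positivity : 0 ≤ (q x)⁻¹)]
    have h4 : ‖q y - q x‖ ≤ Cq * dist x y := by
      rw [← dist_eq_norm, dist_comm]; exact hqq
    have h5 : (q x)⁻¹ * ‖x - y‖ ≤ c⁻¹ * dist x y := by rw [dist_eq_norm]; gcongr
    have h6 : (q x)⁻¹ * ‖q y - q x‖ * ‖(q y)⁻¹ • y‖ ≤ c⁻¹ * (Cq * dist x y) * c⁻¹ := by gcongr
    linarith
  refine h3.trans ?_
  push_cast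
  rw [Real.coe_toNNReal _ (by positivity)]
  have h7 := mul_le_mul_of_nonneg_left h0 (by positivity : 0 ≤ c⁻¹ + c⁻¹ * c⁻¹ * Cq)
  linarith

lemma sphere_cover {m : ℕ} (q : Euc (m+1) → ℝ) (hh : ∀ t : ℝ, 0 < t → ∀ x, q (t • x) = t * q x)
    (x : Euc (m+1)) (hx : x ≠ 0) (hqx : q x = 1) :
    ∃ (i : Fin (m+1)) (s : ℝ) (t : ℝ) (w : Fin m → ℝ), (s = 1 ∨ s = -1) ∧ 0 < t ∧
      w ∈ closedBall (0 : Fin m → ℝ) 1 ∧ x = t • chart i s w ∧ x = nchart q i s w := by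
  obtain ⟨i, s, t, w, hs, ht, hw, h⟩ := chart_cover x hx
  refine ⟨i, s, t, w, hs, ht, hw, h, ?_⟩
  rw [h, hh t ht] at hqx
  rw [nchart, h]
  congr 1
  exact eq_inv_of_mul_eq_one_left hqx

lemma level_finite {m : ℕ} (q : Euc (m+1) → ℝ) {Cq : ℝ≥0} (hq : LipschitzWith Cq q) (c : ℝ) (hc : 0 < c)
    (hqc : ∀ x, c * ‖x‖ ≤ q x) (hh : ∀ t : ℝ, 0 < t → ∀ x, q (t • x) = t * q x) (h0 : q 0 = 0) :
    (Measure.hausdorffMeasure (m : ℝ) : Measure (Euc (m+1))) {x | q x = 1} < ∞ := by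
  have hsub : {x | q x = 1} ⊆ ⋃ i : Fin (m+1),
      (nchart q i 1 '' closedBall 0 1 ∪ nchart q i (-1) '' closedBall 0 1) := by
    intro x hx
    have hx0 : x ≠ 0 := by rintro rfl; rw [mem_ofPred_eq, h0] at hx; norm_num at hx
    obtain ⟨i, s, t, w, hs, ht, hw, h, h'⟩ := sphere_cover q hh x hx0 hx
    refine mem_iUnion.2 ⟨i, ?_⟩
    rcases hs with rfl | rfl
    · exact Or.inl ⟨w, hw, h'.symm⟩
    · exact Or.inr ⟨w, hw, h'.symm⟩
  refine (measure_mono hsub).trans_lt ((measure_iUnion_le _).trans_lt ?_)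
  rw [tsum_fintype, ENNReal.sum_lt_top]
  intro i _
  have key : ∀ s : ℝ, |s| = 1 → (Measure.hausdorffMeasure (m : ℝ) : Measure (Euc (m+1)))
      (nchart q i s '' closedBall 0 1) < ∞ := by
    intro s hs
    obtain ⟨C, hC⟩ := nchart_lip q hq c hc hqc i s hs
    refine (hC.hausdorffMeasure_image_le (Nat.cast_nonneg m) _).trans_lt ?_
    have := hausdorffMeasure_pi_real (ι := Fin m)
    rw [Fintype.card_fin] at this
    rw [this]
    refine ENNReal.mul_lt_top (ENNReal.rpow_lt_top_of_nonneg (Nat.cast_nonneg m) ENNReal.coe_ne_top) ?_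
    exact (isCompact_closedBall _ _).measure_lt_top
  exact (measure_union_le _ _).trans_lt (ENNReal.add_lt_top.2 ⟨key 1 (by simp), key (-1) (by simp)⟩)

lemma level_null {m : ℕ} (q : Euc (m+1) → ℝ) {Cq : ℝ≥0} (hq : LipschitzWith Cq q) (c : ℝ) (hc : 0 < c)
    (hqc : ∀ x, c * ‖x‖ ≤ q x) (hh : ∀ t : ℝ, 0 < t → ∀ x, q (t • x) = t * q x) (h0 : q 0 = 0)
    (f : Euc (m+1) → ℝ) {Cf : ℝ≥0} (hf : LipschitzWith Cf f)
    (hfh : ∀ t : ℝ, 0 < t → ∀ x, f (t • x) = t * f x) :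
    (Measure.hausdorffMeasure (m : ℝ) : Measure (Euc (m+1))) {x | q x = 1 ∧ ∃ u v : Euc (m+1), u ≠ v ∧
      (∀ z, ⟪z, u⟫ ≤ f z) ∧ (∀ z, ⟪z, v⟫ ≤ f z) ∧ ⟪x, u⟫ = f x ∧ ⟪x, v⟫ = f x} = 0 := by
  let N : Fin (m+1) → ℝ → Set (Fin m → ℝ) := fun i s => {w | ¬ DifferentiableAt ℝ (fun w => f (chart i s w)) w}
  have hsub : {x | q x = 1 ∧ ∃ u v : Euc (m+1), u ≠ v ∧
      (∀ z, ⟪z, u⟫ ≤ f z) ∧ (∀ z, ⟪z, v⟫ ≤ f z) ∧ ⟪x, u⟫ = f x ∧ ⟪x, v⟫ = f x} ⊆ ⋃ i : Fin (m+1),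
      (nchart q i 1 '' N i 1 ∪ nchart q i (-1) '' N i (-1)) := by
    rintro x ⟨hx, u, v, huv, hu, hv, hu', hv'⟩
    have hx0 : x ≠ 0 := by rintro rfl; rw [h0] at hx; norm_num at hx
    obtain ⟨i, s, t, w, hs, ht, hw, h, h'⟩ := sphere_cover q hh x hx0 hx
    have hN : w ∈ N i s := by
      intro hd
      refine huv (chart_unique i s (by rcases hs with rfl | rfl <;> norm_num) f w hd u v hu hv ?_ ?_)
      · rw [h, hfh t ht, real_inner_smul_left] at hu'
        exact mul_left_cancel₀ ht.ne' hu'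
      · rw [h, hfh t ht, real_inner_smul_left] at hv'
        exact mul_left_cancel₀ ht.ne' hv'
    refine mem_iUnion.2 ⟨i, ?_⟩
    rcases hs with rfl | rfl
    · exact Or.inl ⟨w, hN, h'.symm⟩
    · exact Or.inr ⟨w, hN, h'.symm⟩
  refine measure_mono_null hsub (measure_iUnion_null fun i => ?_)
  have key : ∀ s : ℝ, |s| = 1 → (Measure.hausdorffMeasure (m : ℝ) : Measure (Euc (m+1)))
      (nchart q i s '' N i s) = 0 := by
    intro s hs
    obtain ⟨C, hC⟩ := nchart_lip q hq c hc hqc i s hs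
    obtain ⟨C', hC'⟩ := chart_lip i s
    refine le_antisymm ((hC.hausdorffMeasure_image_le (Nat.cast_nonneg m) _).trans ?_) bot_le
    have := hausdorffMeasure_pi_real (ι := Fin m)
    rw [Fintype.card_fin] at this
    rw [this]
    have h2 := (hf.comp hC').ae_differentiableAt (μ := (volume : Measure (Fin m → ℝ)))
    have h3 : volume (N i s) = 0 := h2
    rw [h3, mul_zero]
  exact measure_union_null (key 1 (by simp)) (key (-1) (by simp))

/-! ### Abstract limit lemma -/

def supFn {X E : Type*} [PseudoMetricSpace E] (F : X → ℝ≥0∞) (π : X → E) (P : Set X) (ε : ℝ) (y : E) :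
    ℝ≥0∞ := ⨆ a ∈ {a : X | a ∈ P ∧ dist (π a) y < ε}, F a

lemma le_supFn {X E : Type*} [PseudoMetricSpace E] (F : X → ℝ≥0∞) (π : X → E) (P : Set X) (ε : ℝ) (y : E)
    (a : X) (ha : a ∈ P) (h : dist (π a) y < ε) : F a ≤ supFn F π P ε y :=
  le_iSup₂_of_le (f := fun a (_ : a ∈ {a : X | a ∈ P ∧ dist (π a) y < ε}) => F a) a ⟨ha, h⟩ le_rfl

lemma supFn_meas {X E : Type*} [PseudoMetricSpace E] [MeasurableSpace E] [BorelSpace E]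
    (F : X → ℝ≥0∞) (π : X → E) (P : Set X) (ε : ℝ) : Measurable (supFn F π P ε) := by
  apply LowerSemicontinuous.measurable
  intro y b hb
  simp only [supFn, lt_iSup_iff] at hb
  obtain ⟨a, ⟨ha, hd⟩, hb⟩ := hb
  have : ∀ᶠ y' in 𝓝 y, dist (π a) y' < ε :=
    (continuous_const.dist continuous_id).continuousAt.eventually (gt_mem_nhds hd)
  filter_upwards [this] with y' hy'
  exact hb.trans_le (le_supFn F π P ε y' a ha hy')

lemma limit_lemma {X E : Type*} [MetricSpace X] [MetricSpace E] [MeasurableSpace E] [BorelSpace E]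
    (μ : Measure E) (hμ : μ univ < ∞) (F : X → ℝ≥0∞) (hF : Continuous F) (hFt : ∀ a, F a < ∞)
    (π : X → E) (hπ : Continuous π) (P : ℕ → Set X) (hP : Antitone P) (hPc : ∀ m, IsCompact (P m))
    (c : E → ℝ≥0∞) (hc : ∀ᵐ y ∂μ, ∀ a, (∀ m, a ∈ P m) → π a = y → F a ≤ c y) (b : ℝ≥0∞)
    (hb : ∫⁻ y, c y ∂μ < b) :
    ∃ m : ℕ, ∫⁻ y, supFn F π (P m) (1 / ((m:ℝ) + 1)) y ∂μ < b := by
  have hanti : Antitone (fun (m:ℕ) y => supFn F π (P m) (1 / ((m:ℝ) + 1)) y) := by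
    intro m m' hmm y
    refine iSup₂_le fun a ha => le_supFn F π _ _ y a (hP hmm ha.1) (ha.2.trans_le ?_)
    exact one_div_le_one_div_of_le (by positivity) (by gcongr)
  have hfin : ∫⁻ y, supFn F π (P 0) (1 / (((0:ℕ):ℝ) + 1)) y ∂μ ≠ ∞ := by
    rcases (P 0).eq_empty_or_nonempty with he | hne
    · simp [supFn, he]
    obtain ⟨a0, -, ha0⟩ := (hPc 0).exists_isMaxOn hne hF.continuousOn
    refine ne_of_lt (lt_of_le_of_lt (lintegral_mono (g := fun _ => F a0) ?_) ?_)
    · intro y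
      exact iSup₂_le fun a ha => ha0 ha.1
    · rw [lintegral_const]; exact ENNReal.mul_lt_top (hFt _) hμ
  have h1 := lintegral_iInf (μ := μ) (fun m : ℕ => supFn_meas F π (P m) (1 / ((m:ℝ) + 1))) hanti hfin
  have h2 : ∫⁻ y, ⨅ m : ℕ, supFn F π (P m) (1 / ((m:ℝ) + 1)) y ∂μ ≤ ∫⁻ y, c y ∂μ := by
    refine lintegral_mono_ae ?_
    filter_upwards [hc] with y hy
    refine le_of_forall_gt_imp_ge_of_dense fun c' hc' => ?_
    by_contra hcon
    push Not at hcon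
    have hex : ∀ m : ℕ, ∃ a ∈ P m, dist (π a) y < 1 / ((m:ℝ) + 1) ∧ c' < F a := by
      intro m
      have := hcon.trans_le (iInf_le _ m)
      simp only [supFn, lt_iSup_iff] at this
      obtain ⟨a, ha, h⟩ := this
      exact ⟨a, ha.1, ha.2, h⟩
    choose a haP had haF using hex
    obtain ⟨x, hx, φ, hφ, hlim⟩ := (hPc 0).tendsto_subseq (fun m => hP (Nat.zero_le m) (haP m))
    have hxP : ∀ m, x ∈ P m := by
      intro m
      refine (hPc m).isClosed.mem_of_tendsto hlim ?_
      filter_upwards [eventually_ge_atTop m] with k hk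
      exact hP (hk.trans (hφ.id_le k)) (haP _)
    have hxy : π x = y := by
      have t1 : Tendsto (fun k => π (a (φ k))) atTop (𝓝 (π x)) := (hπ.tendsto x).comp hlim
      have t2 : Tendsto (fun k => π (a (φ k))) atTop (𝓝 y) := by
        rw [tendsto_iff_dist_tendsto_zero]
        refine squeeze_zero (fun _ => dist_nonneg) (fun k => (had (φ k)).le) ?_
        exact tendsto_one_div_add_atTop_nhds_zero_nat.comp hφ.tendsto_atTop
      exact tendsto_nhds_unique t1 t2
    have h3 : c' ≤ F x := by
      refine ge_of_tendsto ((hF.tendsto x).comp hlim) (Eventually.of_forall fun k => (haF _).le)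
    exact absurd (hy x hxP hxy) (not_le.2 (hc'.trans_le h3))
  rw [h1] at h2
  exact iInf_lt_iff.1 (h2.trans_lt hb)

/-! ### Convex geometry -/

lemma frontier_of_support {n : ℕ} {K : Set (Euc n)} {u x : Euc n} (hu : u ≠ 0) (hx : x ∈ K)
    (h : ∀ y ∈ K, ⟪y, u⟫ ≤ ⟪x, u⟫) : x ∈ frontier K := by
  refine ⟨subset_closure hx, fun hi => ?_⟩
  rw [mem_interior_iff_mem_nhds] at hi
  have h1 : Tendsto (fun t : ℝ => x + t • u) (𝓝 0) (𝓝 x) := by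
    have : Continuous (fun t : ℝ => x + t • u) := by fun_prop
    simpa using this.tendsto 0
  have h2 : ∀ᶠ t : ℝ in 𝓝[>] 0, x + t • u ∈ K := (h1.eventually hi).filter_mono nhdsWithin_le_nhds
  obtain ⟨t, ht, htp⟩ := (h2.and self_mem_nhdsWithin).exists
  have := h _ ht
  rw [inner_add_left, real_inner_smul_left] at this
  have h3 : 0 < ⟪u, u⟫ := real_inner_self_pos.2 hu
  have h4 : 0 < t := htp
  nlinarith [mul_pos h4 h3]

lemma suppPt_exists {n : ℕ} {K : Set (Euc n)} (hK : IsConvexBody K) {u : Euc n} (hu : u ≠ 0) :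
    ∃ x, IsOuterNormalAt K u x := by
  obtain ⟨x, hx, h⟩ := hK.1.exists_isMaxOn (hK.2.2.mono interior_subset)
    (f := fun y => ⟪y, u⟫) (by fun_prop)
  exact ⟨x, frontier_of_support hu hx fun y hy => h hy, fun y hy => h hy⟩

lemma normal_exists {n : ℕ} {K : Set (Euc n)} (hK : IsConvexBody K) {x : Euc n} (hx : x ∈ frontier K) :
    ∃ u, ‖u‖ = 1 ∧ IsOuterNormalAt K u x := by
  obtain ⟨f, hf⟩ := geometric_hahn_banach_open_point hK.2.1.interior isOpen_interior hx.2
  set v := (InnerProductSpace.toDual ℝ (Euc n)).symm f with hv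
  have hfv : ∀ y, f y = ⟪y, v⟫ := by
    intro y; rw [real_inner_comm, hv, InnerProductSpace.toDual_symm_apply]
  have hv0 : v ≠ 0 := by
    intro h0
    obtain ⟨a, ha⟩ := hK.2.2
    have := hf a ha
    rw [hfv, hfv, h0] at this
    simp at this
  have hle : ∀ y ∈ K, ⟪y, v⟫ ≤ ⟪x, v⟫ := by
    intro y hy
    have hy' : y ∈ closure (interior K) := by
      rw [hK.2.1.closure_interior_eq_closure_of_nonempty_interior hK.2.2]; exact subset_closure hy
    have hcl : IsClosed {y : Euc n | ⟪y, v⟫ ≤ ⟪x, v⟫} := isClosed_le (by fun_prop) (by fun_prop)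
    refine closure_minimal (fun z hz => ?_) hcl hy'
    have := hf z hz
    rw [hfv, hfv] at this
    exact this.le
  have hnp : 0 < ‖v‖ := norm_pos_iff.2 hv0
  refine ⟨‖v‖⁻¹ • v, ?_, hx, fun y hy => ?_⟩
  · rw [norm_smul, norm_inv, norm_norm, inv_mul_cancel₀ hnp.ne']
  · rw [real_inner_smul_right, real_inner_smul_right]
    exact mul_le_mul_of_nonneg_left (hle y hy) (by positivity)

lemma gaussMap_spec {n : ℕ} {K : Set (Euc n)} (hK : IsConvexBody K) {x : Euc n} (hx : x ∈ frontier K) :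
    ‖gaussMap K x‖ = 1 ∧ IsOuterNormalAt K (gaussMap K x) x := by
  have h := normal_exists hK hx
  rw [gaussMap, dif_pos h]
  exact h.choose_spec

lemma gaussMapInv_spec {n : ℕ} {K : Set (Euc n)} (hK : IsConvexBody K) {u : Euc n} (hu : u ≠ 0) :
    IsOuterNormalAt K u (gaussMapInv K u) := by
  have h := suppPt_exists hK hu
  rw [gaussMapInv, dif_pos h]
  exact h.choose_spec

lemma suppFn_eq {n : ℕ} {K : Set (Euc n)} {u x : Euc n} (hx : x ∈ K)
    (h : ∀ y ∈ K, ⟪y, u⟫ ≤ ⟪x, u⟫) : suppFn K u = ⟪x, u⟫ := by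
  refine IsGreatest.csSup_eq ⟨⟨x, hx, rfl⟩, ?_⟩
  rintro _ ⟨y, hy, rfl⟩
  exact h y hy

lemma IsConvexBody.frontier_subset {n : ℕ} {K : Set (Euc n)} (hK : IsConvexBody K) : frontier K ⊆ K :=
  hK.1.isClosed.frontier_subset

lemma proj_exists {n : ℕ} {K : Set (Euc n)} (hK : IsConvexBody K) :
    ∃ π : Euc n → Euc n, LipschitzWith 1 π ∧ (∀ z, π z ∈ K) ∧ (∀ z, ∀ w ∈ K, ‖z - π z‖ ≤ ‖z - w‖) ∧
      ∀ x ∈ K, ∀ u, (∀ y ∈ K, ⟪y, u⟫ ≤ ⟪x, u⟫) → ∀ t : ℝ, 0 ≤ t → π (x + t • u) = x := by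
  have hne : K.Nonempty := hK.2.2.mono interior_subset
  choose π hπ hmin using fun z => exists_norm_eq_iInf_of_complete_convex hne hK.1.isComplete hK.2.1 z
  have hvar : ∀ z, ∀ w ∈ K, ⟪z - π z, w - π z⟫ ≤ 0 := fun z =>
    (norm_eq_iInf_iff_real_inner_le_zero hK.2.1 (hπ z)).1 (hmin z)
  have hnn : ∀ a b x y : Euc n, ⟪a - x, y - x⟫ ≤ 0 → ⟪b - y, x - y⟫ ≤ 0 → ‖x - y‖ ≤ ‖a - b‖ := by
    intro a b x y h1 h2
    have h3 : ‖x - y‖ * ‖x - y‖ ≤ ‖a - b‖ * ‖x - y‖ := by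
      refine le_trans ?_ (real_inner_le_norm (a - b) (x - y))
      rw [← real_inner_self_eq_norm_mul_norm]
      have e : ⟪a - b, x - y⟫ = ⟪x - y, x - y⟫ - ⟪a - x, y - x⟫ - ⟪b - y, x - y⟫ := by
        rw [← neg_sub x y, inner_neg_right, sub_neg_eq_add, ← inner_add_left, ← inner_sub_left]
        congr 1; abel
      rw [e]; linarith
    rcases (norm_nonneg (x - y)).eq_or_lt with h | h
    · rw [← h]; exact norm_nonneg _
    · exact le_of_mul_le_mul_right h3 h
  refine ⟨π, ?_, hπ, ?_, ?_⟩
  · refine LipschitzWith.of_dist_le_mul fun a b => ?_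
    rw [NNReal.coe_one, one_mul, dist_eq_norm, dist_eq_norm]
    exact hnn a b _ _ (hvar a _ (hπ b)) (hvar b _ (hπ a))
  · intro z w hw
    rw [hmin z]
    exact ciInf_le ⟨0, by rintro _ ⟨w, rfl⟩; exact norm_nonneg _⟩ (⟨w, hw⟩ : K)
  · intro x hx u hu t ht
    have := hnn (x + t • u) (x + t • u) (π (x + t • u)) x (hvar _ _ hx) ?_
    · rw [sub_self, norm_zero] at this
      exact sub_eq_zero.1 (norm_le_zero_iff.1 this)
    · rw [add_sub_cancel_left, real_inner_smul_left, inner_sub_right, real_inner_comm, real_inner_comm x]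
      have := hu _ (hπ (x + t • u))
      exact mul_nonpos_of_nonneg_of_nonpos ht (by linarith)

/-- Boundary domination. -/
lemma bdry_dom {m : ℕ} {K L : Set (Euc (m+1))} (hK : IsConvexBody K) (h0 : (0 : Euc (m+1)) ∈ interior K)
    (hL : IsConvexBody L) (ε : ℝ≥0) (hsub : ∀ x ∈ L, (1 + (ε:ℝ))⁻¹ • x ∈ K) (δ R : ℝ)
    (hR : ∀ x ∈ K, ‖x‖ ≤ R) (hδ : ∀ x ∈ K, ∃ y ∈ L, dist x y ≤ δ) :
    ∃ Φ : Euc (m+1) → Euc (m+1), Measurable Φ ∧ (∀ y ∈ K, dist (Φ y) y ≤ 2 * ε * R + δ) ∧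
      (Measure.hausdorffMeasure (m:ℝ)).restrict (frontier L) ≤
        ((1 + ε : ℝ≥0) : ℝ≥0∞) ^ (m:ℝ) •
          Measure.map Φ ((Measure.hausdorffMeasure (m:ℝ)).restrict (frontier K)) := by
  obtain ⟨π, hlip, hmem, hmin, hray⟩ := proj_exists hL
  have hlip2 : LipschitzWith (1 + ε) (fun y => π ((1 + (ε:ℝ)) • y)) := by
    refine LipschitzWith.of_dist_le_mul fun a b => ?_
    refine (hlip.dist_le_mul _ _).trans ?_
    rw [dist_smul₀, Real.norm_of_nonneg (by positivity)]
    simp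
  have hεp : (0:ℝ) < 1 + ε := by positivity
  refine ⟨_, hlip2.continuous.measurable, ?_, ?_⟩
  · intro y hy
    obtain ⟨w, hw, hyw⟩ := hδ y hy
    have h1 := hmin ((1 + (ε:ℝ)) • y) w hw
    have h2 : ‖(1 + (ε:ℝ)) • y - y‖ ≤ ε * R := by
      rw [add_smul, one_smul, add_sub_cancel_left, norm_smul, Real.norm_of_nonneg (by positivity)]
      exact mul_le_mul_of_nonneg_left (hR y hy) (by positivity)
    have h3 : ‖(1 + (ε:ℝ)) • y - w‖ ≤ ε * R + δ := by
      refine (norm_sub_le_norm_sub_add_norm_sub _ y _).trans ?_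
      rw [dist_eq_norm] at hyw
      linarith
    rw [dist_comm, dist_eq_norm]
    refine (norm_sub_le_norm_sub_add_norm_sub _ ((1 + (ε:ℝ)) • y) _).trans ?_
    rw [norm_sub_rev y]
    linarith
  · rw [Measure.le_iff]
    intro A hA
    rw [Measure.smul_apply, Measure.map_apply hlip2.continuous.measurable hA, Measure.restrict_apply hA,
      Measure.restrict_apply (hlip2.continuous.measurable hA), smul_eq_mul]
    refine le_trans (measure_mono ?_) (hlip2.hausdorffMeasure_image_le (Nat.cast_nonneg m) _)
    rintro x ⟨hxA, hxL⟩
    obtain ⟨u, hu1, -, hu⟩ := normal_exists hL hxL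
    have hxL' := hL.frontier_subset hxL
    have hKn : K ∈ 𝓝 (0 : Euc (m+1)) := mem_interior_iff_mem_nhds.1 h0
    have hgc : Continuous (fun t : ℝ => gauge K ((1 + (ε:ℝ))⁻¹ • (x + t • u))) := by
      have := continuous_gauge hK.2.1 hKn
      fun_prop
    have hR0 : 0 ≤ R := by
      have := hR 0 (interior_subset h0); simpa using this
    have hg0 : gauge K ((1 + (ε:ℝ))⁻¹ • (x + (0:ℝ) • u)) ≤ 1 := by
      rw [zero_smul, add_zero]
      exact gauge_le_one_of_mem (hsub x hxL')
    set T : ℝ := (1 + ε) * (R + 1) + ‖x‖ with hT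
    have hT0 : 0 ≤ T := by positivity
    have hg1 : 1 ≤ gauge K ((1 + (ε:ℝ))⁻¹ • (x + T • u)) := by
      by_contra hlt
      push Not at hlt
      have hmK : (1 + (ε:ℝ))⁻¹ • (x + T • u) ∈ K := by
        have := setOfPred_gauge_lt_one_eq_interior hK.2.1 hKn
        exact interior_subset (this ▸ hlt : _ ∈ interior K)
      have h1 := hR _ hmK
      rw [norm_smul, norm_inv, Real.norm_of_nonneg hεp.le, inv_mul_le_iff₀ hεp] at h1
      have h2 : T ≤ ‖x + T • u‖ + ‖x‖ := by
        have := norm_sub_le (x + T • u) x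
        rw [add_sub_cancel_left, norm_smul, hu1, mul_one, Real.norm_of_nonneg hT0] at this
        exact this
      nlinarith
    obtain ⟨t, ⟨ht0, -⟩, ht⟩ := intermediate_value_Icc hT0 hgc.continuousOn ⟨hg0, hg1⟩
    have hx2 : (fun y => π ((1 + (ε:ℝ)) • y)) ((1 + (ε:ℝ))⁻¹ • (x + t • u)) = x := by
      simp only [smul_smul, mul_inv_cancel₀ hεp.ne', one_smul]
      exact hray x hxL' u hu t ht0
    refine ⟨_, ⟨?_, (gauge_eq_one_iff_mem_frontier hK.2.1 hKn).1 ht⟩, hx2⟩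
    have hx3 : π ((1 + (ε:ℝ)) • (1 + (ε:ℝ))⁻¹ • (x + t • u)) = x := hx2
    rw [mem_preimage, hx3]
    exact hxA

/-! ### Almost everywhere uniqueness -/

lemma suppFn_lip {n : ℕ} {K : Set (Euc n)} (hK : IsConvexBody K) (R : ℝ≥0) (hR : ∀ x ∈ K, ‖x‖ ≤ R) :
    LipschitzWith R (suppFn K) := by
  have key : ∀ u v, suppFn K u ≤ suppFn K v + R * dist u v := by
    intro u v
    obtain ⟨x, hx, h⟩ := hK.1.exists_isMaxOn (hK.2.2.mono interior_subset)
      (f := fun y => ⟪y, u⟫) (by fun_prop)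
    obtain ⟨x', hx', h'⟩ := hK.1.exists_isMaxOn (hK.2.2.mono interior_subset)
      (f := fun y => ⟪y, v⟫) (by fun_prop)
    rw [suppFn_eq hx (fun y hy => h hy), suppFn_eq hx' (fun y hy => h' hy)]
    have h1 : ⟪x, v⟫ ≤ ⟪x', v⟫ := h' hx
    have h2 : ⟪x, u⟫ = ⟪x, v⟫ + ⟪x, u - v⟫ := by rw [inner_sub_right]; ring
    have h3 := real_inner_le_norm x (u - v)
    have h4 : ‖x‖ * ‖u - v‖ ≤ R * dist u v := by
      rw [dist_eq_norm]; exact mul_le_mul_of_nonneg_right (hR x hx) (norm_nonneg _)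
    linarith
  refine LipschitzWith.of_dist_le_mul fun u v => ?_
  rw [Real.dist_eq, abs_le]
  have h1 := key u v
  have h2 := key v u
  rw [dist_comm v u] at h2
  constructor <;> linarith

lemma suppFn_hom {n : ℕ} {K : Set (Euc n)} (hK : IsConvexBody K) (t : ℝ) (ht : 0 < t) (u : Euc n) :
    suppFn K (t • u) = t * suppFn K u := by
  obtain ⟨x, hx, h⟩ := hK.1.exists_isMaxOn (hK.2.2.mono interior_subset)
    (f := fun y => ⟪y, u⟫) (by fun_prop)
  rw [suppFn_eq hx (fun y hy => h hy), suppFn_eq (x := x) hx, real_inner_smul_right]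
  intro y hy
  rw [real_inner_smul_right, real_inner_smul_right]
  exact mul_le_mul_of_nonneg_left (h hy) ht.le

lemma le_suppFn {n : ℕ} {K : Set (Euc n)} (hK : IsConvexBody K) {x : Euc n} (hx : x ∈ K) (u : Euc n) :
    ⟪x, u⟫ ≤ suppFn K u := by
  obtain ⟨x', hx', h⟩ := hK.1.exists_isMaxOn (hK.2.2.mono interior_subset)
    (f := fun y => ⟪y, u⟫) (by fun_prop)
  rw [suppFn_eq hx' (fun y hy => h hy)]
  exact h hx

lemma body_bound {n : ℕ} {K : Set (Euc n)} (hK : IsConvexBody K) :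
    ∃ R : ℝ≥0, 0 < R ∧ ∀ x ∈ K, ‖x‖ ≤ R := by
  obtain ⟨R, hR0, hR⟩ := hK.1.isBounded.exists_pos_norm_le
  exact ⟨⟨R, hR0.le⟩, hR0, hR⟩

lemma sphere_fin (m : ℕ) :
    (Measure.hausdorffMeasure (m : ℝ) : Measure (Euc (m+1))) (sphere 0 1) < ∞ := by
  have := level_finite (m := m) (fun x => ‖x‖) lipschitzWith_one_norm 1 one_pos (by simp)
    (by intro t ht x; simp [norm_smul, abs_of_pos ht]) (by simp)
  convert this using 2
  ext x; simp

lemma unique_supp {m : ℕ} {K : Set (Euc (m+1))} (hK : IsConvexBody K) :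
    ∀ᵐ u ∂((Measure.hausdorffMeasure (m : ℝ)).restrict (sphere (0 : Euc (m+1)) 1)),
      ∀ x ∈ K, ∀ y ∈ K, (∀ z ∈ K, ⟪z, u⟫ ≤ ⟪x, u⟫) → (∀ z ∈ K, ⟪z, u⟫ ≤ ⟪y, u⟫) → x = y := by
  obtain ⟨R, -, hR⟩ := body_bound hK
  have := level_null (m := m) (fun x => ‖x‖) lipschitzWith_one_norm 1 one_pos (by simp)
    (by intro t ht x; simp [norm_smul, abs_of_pos ht]) (by simp) (suppFn K) (suppFn_lip hK R hR)
    (fun t ht x => suppFn_hom hK t ht x)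
  rw [ae_restrict_iff' isClosed_sphere.measurableSet, ae_iff]
  refine measure_mono_null ?_ this
  intro u hu
  simp only [mem_ofPred_eq, not_forall] at hu ⊢
  obtain ⟨hu1, x, hx, y, hy, h1, h2, hne⟩ := hu
  refine ⟨by simpa using hu1, x, y, hne, ?_, ?_, ?_, ?_⟩
  · intro z; rw [real_inner_comm]; exact le_suppFn hK hx z
  · intro z; rw [real_inner_comm]; exact le_suppFn hK hy z
  · rw [suppFn_eq hx h1, real_inner_comm]
  · rw [suppFn_eq hy h2, real_inner_comm]

lemma inner_pos_of_support {n : ℕ} {K : Set (Euc n)} {r : ℝ}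
    (hr : closedBall 0 r ⊆ K) (hr0 : 0 ≤ r) {x u : Euc n} {δ : ℝ} (hu : ‖u‖ = 1)
    (h : ∀ z ∈ K, ⟪z, u⟫ ≤ ⟪x, u⟫ + δ) : r - δ ≤ ⟪x, u⟫ := by
  have := h (r • u) (hr (by simp [norm_smul, hu, abs_of_nonneg hr0]))
  rw [real_inner_smul_left, real_inner_self_eq_norm_mul_norm, hu] at this
  linarith

lemma body_ball {n : ℕ} {K : Set (Euc n)} (h0 : (0 : Euc n) ∈ interior K) :
    ∃ r : ℝ≥0, 0 < r ∧ closedBall 0 (r:ℝ) ⊆ K := by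
  obtain ⟨r, hr, h⟩ := Metric.nhds_basis_closedBall.mem_iff.1 (mem_interior_iff_mem_nhds.1 h0)
  exact ⟨⟨r, hr.le⟩, hr, h⟩

lemma gauge_facts {n : ℕ} {K : Set (Euc n)} (hK : IsConvexBody K) (h0 : (0 : Euc n) ∈ interior K) :
    ∃ C : ℝ≥0, LipschitzWith C (gauge K) ∧ ∃ c : ℝ, 0 < c ∧ (∀ x, c * ‖x‖ ≤ gauge K x) ∧
      (∀ t : ℝ, 0 < t → ∀ x, gauge K (t • x) = t * gauge K x) := by
  obtain ⟨R, hR0, hR⟩ := body_bound hK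
  obtain ⟨r, hr0, hr⟩ := body_ball h0
  refine ⟨_, hK.2.1.lipschitzWith_gauge hr0 (ball_subset_closedBall.trans hr), (R:ℝ)⁻¹, by positivity, ?_, ?_⟩
  · intro x
    have := le_gauge_of_subset_closedBall (x := x) (absorbent_nhds_zero (mem_interior_iff_mem_nhds.1 h0))
      R.2 (fun x hx => by simpa using hR x hx)
    rw [inv_mul_eq_div]; exact this
  · intro t ht x
    rw [gauge_smul_of_nonneg ht.le, smul_eq_mul]

lemma bdry_fin {m : ℕ} {K : Set (Euc (m+1))} (hK : IsConvexBody K) (h0 : (0 : Euc (m+1)) ∈ interior K) :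
    (Measure.hausdorffMeasure (m : ℝ) : Measure (Euc (m+1))) (frontier K) < ∞ := by
  obtain ⟨C, hC, c, hc, hcc, hh⟩ := gauge_facts hK h0
  have := level_finite (m := m) (gauge K) hC c hc hcc hh gauge_zero
  convert this using 2
  ext x
  exact (gauge_eq_one_iff_mem_frontier hK.2.1 (mem_interior_iff_mem_nhds.1 h0)).symm

lemma unique_normal {m : ℕ} {K : Set (Euc (m+1))} (hK : IsConvexBody K)
    (h0 : (0 : Euc (m+1)) ∈ interior K) :
    ∀ᵐ y ∂((Measure.hausdorffMeasure (m : ℝ)).restrict (frontier K)),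
      ∀ u v, ‖u‖ = 1 → ‖v‖ = 1 → (∀ z ∈ K, ⟪z, u⟫ ≤ ⟪y, u⟫) → (∀ z ∈ K, ⟪z, v⟫ ≤ ⟪y, v⟫) → u = v := by
  obtain ⟨C, hC, c, hc, hcc, hh⟩ := gauge_facts hK h0
  obtain ⟨r, hr0, hr⟩ := body_ball h0
  have hKn := mem_interior_iff_mem_nhds.1 h0
  have := level_null (m := m) (gauge K) hC c hc hcc hh gauge_zero (gauge K) hC hh
  rw [ae_restrict_iff' isClosed_frontier.measurableSet, ae_iff]
  refine measure_mono_null ?_ this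
  intro y hy
  simp only [mem_ofPred_eq, not_forall] at hy ⊢
  obtain ⟨hyK, u, v, hu1, hv1, hu, hv, hne⟩ := hy
  have hy1 := (gauge_eq_one_iff_mem_frontier hK.2.1 hKn).2 hyK
  have hpos : ∀ u, ‖u‖ = 1 → (∀ z ∈ K, ⟪z, u⟫ ≤ ⟪y, u⟫) → 0 < ⟪y, u⟫ := by
    intro u hu1 hu
    have := inner_pos_of_support hr r.2 (δ := 0) hu1 (by simpa using hu)
    have : (0:ℝ) < r := hr0
    linarith
  have hsub : ∀ u, ‖u‖ = 1 → (∀ z ∈ K, ⟪z, u⟫ ≤ ⟪y, u⟫) → ∀ z, ⟪z, (⟪y, u⟫)⁻¹ • u⟫ ≤ gauge K z := by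
    intro u hu1 hu z
    have hp := hpos u hu1 hu
    refine le_of_forall_gt_imp_ge_of_dense fun a ha => ?_
    obtain ⟨b, hb0, hba, hb⟩ := exists_lt_of_gauge_lt (absorbent_nhds_zero hKn) ha
    obtain ⟨w, hw, rfl⟩ := hb
    simp only [real_inner_smul_right, real_inner_smul_left]
    have h1 := hu w hw
    rw [inv_mul_le_iff₀ hp]
    nlinarith
  have heq : ∀ u, ‖u‖ = 1 → (∀ z ∈ K, ⟪z, u⟫ ≤ ⟪y, u⟫) → ⟪y, (⟪y, u⟫)⁻¹ • u⟫ = gauge K y := by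
    intro u hu1 hu
    rw [real_inner_smul_right, hy1, inv_mul_cancel₀ (hpos u hu1 hu).ne']
  refine ⟨hy1, (⟪y, u⟫)⁻¹ • u, (⟪y, v⟫)⁻¹ • v, ?_, hsub u hu1 hu, hsub v hv1 hv, heq u hu1 hu, heq v hv1 hv⟩
  intro he
  apply hne
  have hpu := hpos u hu1 hu
  have hpv := hpos v hv1 hv
  have h1 := congrArg norm he
  rw [norm_smul, norm_smul, hu1, hv1, mul_one, mul_one, norm_inv, norm_inv, inv_inj,
    Real.norm_of_nonneg hpu.le, Real.norm_of_nonneg hpv.le] at h1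
  rw [h1] at he
  exact smul_right_injective _ (inv_ne_zero hpv.ne') he

def Pset {n : ℕ} (K : Set (Euc n)) (ε : ℝ) : Set (Euc n × Euc n) :=
  {a | a.1 ∈ cthickening ε K ∧ ‖a.2‖ = 1 ∧ ∀ z ∈ K, ⟪z, a.2⟫ ≤ ⟪a.1, a.2⟫ + ε}

lemma Pset_compact {n : ℕ} {K : Set (Euc n)} (hK : IsConvexBody K) (ε : ℝ) : IsCompact (Pset K ε) := by
  have h1 : IsCompact (cthickening ε K ×ˢ sphere (0 : Euc n) 1) :=
    hK.1.cthickening.prod (isCompact_sphere _ _)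
  refine h1.of_isClosed_subset ?_ ?_
  · have h2 : IsClosed {a : Euc n × Euc n | a.1 ∈ cthickening ε K} :=
      isClosed_cthickening.preimage continuous_fst
    have h3 : IsClosed {a : Euc n × Euc n | ‖a.2‖ = 1} := isClosed_eq (by fun_prop) (by fun_prop)
    have h4 : IsClosed {a : Euc n × Euc n | ∀ z ∈ K, ⟪z, a.2⟫ ≤ ⟪a.1, a.2⟫ + ε} := by
      have : {a : Euc n × Euc n | ∀ z ∈ K, ⟪z, a.2⟫ ≤ ⟪a.1, a.2⟫ + ε} =
        ⋂ z ∈ K, {a : Euc n × Euc n | ⟪z, a.2⟫ ≤ ⟪a.1, a.2⟫ + ε} := by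
          ext a; simp
      rw [this]
      exact isClosed_biInter fun z _ => isClosed_le (by fun_prop) (by fun_prop)
    exact h2.inter (h3.inter h4)
  · rintro a ⟨h2, h3, -⟩
    exact ⟨h2, by simpa using h3⟩

lemma Pset_mono {n : ℕ} {K : Set (Euc n)} {ε ε' : ℝ} (h : ε ≤ ε') : Pset K ε ⊆ Pset K ε' := by
  rintro a ⟨h1, h2, h3⟩
  exact ⟨cthickening_mono h _ h1, h2, fun z hz => by linarith [h3 z hz]⟩

lemma Pset_inter {n : ℕ} {K : Set (Euc n)} (hK : IsConvexBody K) {a : Euc n × Euc n}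
    (h : ∀ m : ℕ, a ∈ Pset K (1 / ((m:ℝ) + 1))) :
    a.1 ∈ K ∧ ‖a.2‖ = 1 ∧ ∀ z ∈ K, ⟪z, a.2⟫ ≤ ⟪a.1, a.2⟫ := by
  have ht : Tendsto (fun m : ℕ => 1 / ((m:ℝ) + 1)) atTop (𝓝 0) := tendsto_one_div_add_atTop_nhds_zero_nat
  refine ⟨?_, (h 0).2.1, fun z hz => ?_⟩
  · rw [← hK.1.isClosed.closure_eq, mem_closure_iff_infEDist_zero]
    refine le_antisymm ?_ bot_le
    have h2 := (ENNReal.continuous_ofReal.tendsto 0).comp ht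
    rw [ENNReal.ofReal_zero] at h2
    exact ge_of_tendsto h2 (Eventually.of_forall fun m => mem_cthickening_iff.1 (h m).1)
  · have h2 : Tendsto (fun m : ℕ => ⟪a.1, a.2⟫ + 1 / ((m:ℝ) + 1)) atTop (𝓝 (⟪a.1, a.2⟫ + 0)) :=
      tendsto_const_nhds.add ht
    rw [add_zero] at h2
    exact ge_of_tendsto h2 (Eventually.of_forall fun m => (h m).2.2 z hz)

lemma gaussMapInv_aemeas {m : ℕ} {K : Set (Euc (m+1))} (hK : IsConvexBody K) :
    AEMeasurable (gaussMapInv K)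
      ((Measure.hausdorffMeasure (m : ℝ)).restrict (sphere (0 : Euc (m+1)) 1)) := by
  set σ := (Measure.hausdorffMeasure (m : ℝ)).restrict (sphere (0 : Euc (m+1)) 1) with hσ
  have hu := unique_supp hK
  have hs : ∀ᵐ u ∂σ, u ∈ sphere (0 : Euc (m+1)) 1 := ae_restrict_mem isClosed_sphere.measurableSet
  obtain ⟨N, hN, hNm, hN0⟩ := exists_measurable_superset_of_null (ae_iff.1 (hu.and hs))
  have hgood : ∀ u ∈ Nᶜ, (∀ x ∈ K, ∀ y ∈ K, (∀ z ∈ K, ⟪z, u⟫ ≤ ⟪x, u⟫) → (∀ z ∈ K, ⟪z, u⟫ ≤ ⟪y, u⟫) → x = y)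
      ∧ u ∈ sphere (0 : Euc (m+1)) 1 := by
    intro u hu'
    by_contra hcon
    exact hu' (hN hcon)
  have hne : ∀ u ∈ sphere (0 : Euc (m+1)) 1, u ≠ 0 := by
    rintro u hu rfl; simp at hu
  have hcont : ContinuousOn (gaussMapInv K) Nᶜ := by
    intro u huN
    obtain ⟨hun, hus⟩ := hgood u huN
    have hspec := gaussMapInv_spec hK (hne u hus)
    refine hK.1.tendsto_nhds_of_unique_mapClusterPt ?_ ?_
    · filter_upwards [self_mem_nhdsWithin] with v hv
      exact hK.frontier_subset (gaussMapInv_spec hK (hne v (hgood v hv).2)).1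
    · intro y hyK hy
      refine hun y hyK _ (hK.frontier_subset hspec.1) ?_ hspec.2
      intro z hz
      have hy2 : MapClusterPt (u, y) (𝓝[Nᶜ] u) (fun v => (v, gaussMapInv K v)) := by
        have hid : Tendsto (fun v : Euc (m+1) => v) (𝓝[Nᶜ] u) (𝓝 u) := tendsto_id.mono_left nhdsWithin_le_nhds
        rw [mapClusterPt_iff_frequently]
        intro s hs
        obtain ⟨U, hU, V, hV, hUV⟩ := mem_nhds_prod_iff.1 hs
        refine ((mapClusterPt_iff_frequently.1 hy V hV).and_eventually (hid hU)).mono ?_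
        rintro v ⟨h1, h2⟩
        exact hUV ⟨h2, h1⟩
      have hcl : IsClosed {a : Euc (m+1) × Euc (m+1) | ⟪z, a.1⟫ ≤ ⟪a.2, a.1⟫} :=
        isClosed_le (by fun_prop) (by fun_prop)
      refine hcl.mem_of_mapClusterPt hy2 ?_
      filter_upwards [self_mem_nhdsWithin] with v hv
      exact (gaussMapInv_spec hK (hne v (hgood v hv).2)).2 z hz
  have h1 := hcont.aemeasurable (μ := σ) hNm.compl
  have h2 : σ.restrict Nᶜ = σ := by
    apply Measure.restrict_eq_self_of_ae_mem
    exact compl_mem_ae_iff.2 hN0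
  rwa [h2] at h1

/-! ### Main proof -/

def Close {n : ℕ} (L K : Set (Euc n)) (δ : ℝ) : Prop :=
  (∀ x ∈ L, ∃ y ∈ K, dist x y ≤ δ) ∧ ∀ x ∈ K, ∃ y ∈ L, dist x y ≤ δ

lemma close_self {n : ℕ} (K : Set (Euc n)) {δ : ℝ} (hδ : 0 ≤ δ) : Close K K δ :=
  ⟨fun x hx => ⟨x, hx, by rw [dist_self]; exact hδ⟩, fun x hx => ⟨x, hx, by rw [dist_self]; exact hδ⟩⟩

lemma close_eventually {n : ℕ} {K : Set (Euc n)} {Kseq : ℕ → Set (Euc n)}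
    (hconv : Tendsto (fun j => hausdorffEDist (Kseq j) K) atTop (𝓝 0)) {δ : ℝ} (hδ : 0 < δ) :
    ∀ᶠ j in atTop, Close (Kseq j) K δ := by
  have h : ∀ᶠ j in atTop, hausdorffEDist (Kseq j) K < ENNReal.ofReal δ :=
    hconv.eventually (gt_mem_nhds (by simpa using hδ))
  filter_upwards [h] with j hj
  constructor
  · intro x hx
    obtain ⟨y, hy, hxy⟩ := exists_edist_lt_of_hausdorffEDist_lt hx hj
    refine ⟨y, hy, ?_⟩
    rw [edist_dist] at hxy
    exact ((ENNReal.ofReal_lt_ofReal_iff hδ).1 hxy).le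
  · intro x hx
    rw [hausdorffEDist_comm] at hj
    obtain ⟨y, hy, hxy⟩ := exists_edist_lt_of_hausdorffEDist_lt hx hj
    refine ⟨y, hy, ?_⟩
    rw [edist_dist] at hxy
    exact ((ENNReal.ofReal_lt_ofReal_iff hδ).1 hxy).le

lemma close_support {n : ℕ} {L K : Set (Euc n)} {δ : ℝ} (h : Close L K δ) {x u : Euc n}
    (hu : ‖u‖ = 1) (hs : ∀ y ∈ L, ⟪y, u⟫ ≤ ⟪x, u⟫) : ∀ z ∈ K, ⟪z, u⟫ ≤ ⟪x, u⟫ + δ := by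
  intro z hz
  obtain ⟨y, hy, hzy⟩ := h.2 z hz
  have h1 := hs y hy
  have h2 : ⟪z, u⟫ = ⟪y, u⟫ + ⟪z - y, u⟫ := by rw [inner_sub_left]; ring
  have h3 := real_inner_le_norm (z - y) u
  rw [hu, mul_one, ← dist_eq_norm] at h3
  linarith

lemma close_pair {n : ℕ} {L K : Set (Euc n)} {δ ε : ℝ} (h : Close L K δ) (hδε : δ ≤ ε) {x u : Euc n}
    (hx : x ∈ L) (hu : ‖u‖ = 1) (hs : ∀ y ∈ L, ⟪y, u⟫ ≤ ⟪x, u⟫) : (x, u) ∈ Pset K ε := by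
  refine Pset_mono hδε ⟨?_, hu, close_support h hu hs⟩
  obtain ⟨y, hy, hxy⟩ := h.1 x hx
  exact mem_cthickening_of_dist_le x y δ K hy hxy

lemma close_sub {n : ℕ} {L K : Set (Euc n)} (hK : IsConvexBody K) {δ ε r : ℝ} (hr : 0 < r)
    (hrK : closedBall 0 r ⊆ K) (hε : 0 < ε) (hδ : δ ≤ ε * r) (h : Close L K δ) :
    ∀ x ∈ L, (1 + ε)⁻¹ • x ∈ K := by
  intro x hx
  obtain ⟨y, hy, hxy⟩ := h.1 x hx
  have h1 : ε⁻¹ • (x - y) ∈ K := by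
    apply hrK
    rw [mem_closedBall_zero_iff, norm_smul, norm_inv, Real.norm_of_nonneg hε.le, inv_mul_le_iff₀ hε,
      ← dist_eq_norm]
    linarith
  have h2 := hK.2.1 hy h1 (by positivity : (0:ℝ) ≤ (1 + ε)⁻¹)
    (by positivity : (0:ℝ) ≤ (1 + ε)⁻¹ * ε) (by field_simp)
  convert h2 using 1
  rw [smul_smul, mul_assoc, mul_inv_cancel₀ hε.ne', mul_one, ← smul_add, add_sub_cancel]

lemma lint_fin {X E : Type*} [MetricSpace X] [MeasurableSpace E]
    (μ : Measure E) (hμ : μ univ < ∞) (F : X → ℝ≥0∞) (hF : Continuous F) (hFt : ∀ a, F a < ∞)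
    (P : Set X) (hPc : IsCompact P) (c : E → ℝ≥0∞) (hc : ∀ᵐ y ∂μ, ∃ a ∈ P, c y ≤ F a) :
    ∫⁻ y, c y ∂μ < ∞ := by
  rcases P.eq_empty_or_nonempty with he | hne
  · have : ∀ᵐ y ∂μ, c y ≤ 0 := by
      filter_upwards [hc] with y hy
      obtain ⟨a, ha, -⟩ := hy
      rw [he] at ha; exact ha.elim
    refine (lintegral_mono_ae this).trans_lt ?_
    simp
  obtain ⟨a0, -, ha0⟩ := hPc.exists_isMaxOn hne hF.continuousOn
  have : ∀ᵐ y ∂μ, c y ≤ F a0 := by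
    filter_upwards [hc] with y hy
    obtain ⟨a, ha, h⟩ := hy
    exact h.trans (ha0 ha)
  refine (lintegral_mono_ae this).trans_lt ?_
  rw [lintegral_const]; exact ENNReal.mul_lt_top (hFt _) hμ

lemma extend_pos {n : ℕ} {S : Set (Euc n)} (hS : IsClosed S) (g : Euc n → ℝ) (hg : ContinuousOn g S)
    (hpos : ∀ x ∈ S, 0 < g x) :
    ∃ G : Euc n → ℝ, Continuous G ∧ (∀ x, 0 < G x) ∧ ∀ x ∈ S, G x = g x := by
  have hc : Continuous (fun x : S => Real.log (g x)) := by
    rw [continuousOn_iff_continuous_domRestrict] at hg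
    exact Continuous.log hg (fun x => (hpos x x.2).ne')
  obtain ⟨φ, hφ⟩ := ContinuousMap.exists_restrict_eq hS ⟨_, hc⟩
  refine ⟨fun x => Real.exp (φ x), by fun_prop, fun x => Real.exp_pos _, fun x hx => ?_⟩
  have : φ x = Real.log (g x) := by
    have := DFunLike.congr_fun hφ ⟨x, hx⟩
    simpa using this
  simp only [this, Real.exp_log (hpos x hx)]

lemma main_A {m : ℕ} {K : Set (Euc (m+1))} (hK : IsConvexBody K)
    {Kseq : ℕ → Set (Euc (m+1))} (hKseq : ∀ j, IsConvexBody (Kseq j))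
    (hconv : Tendsto (fun j => hausdorffEDist (Kseq j) K) atTop (𝓝 0))
    (G : Euc (m+1) → ℝ) (hG : Continuous G) (hGp : ∀ x, 0 < G x) (q : ℝ) (g : Euc (m+1) → ℝ)
    (hg : ∀ x ∈ frontier K, G x = g x) :
    ∫⁻ x, ENNReal.ofReal (g x) ^ q ∂(curv0 (m+1) K) < ∞ ∧
    ∀ b, ∫⁻ x, ENNReal.ofReal (g x) ^ q ∂(curv0 (m+1) K) < b →
      ∀ᶠ j in atTop, ∫⁻ x, ENNReal.ofReal (G x) ^ q ∂(curv0 (m+1) (Kseq j)) < b := by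
  have hcast : (((m+1 : ℕ) : ℝ) - 1) = m := by push_cast; ring
  simp only [curv0, hcast]
  set σ := (Measure.hausdorffMeasure (m : ℝ)).restrict (sphere (0 : Euc (m+1)) 1) with hσ
  have hσf : σ univ < ∞ := by rw [hσ, Measure.restrict_apply_univ]; exact sphere_fin m
  have hs : ∀ᵐ u ∂σ, u ∈ sphere (0 : Euc (m+1)) 1 := ae_restrict_mem isClosed_sphere.measurableSet
  have hs1 : ∀ u ∈ sphere (0 : Euc (m+1)) 1, ‖u‖ = 1 := fun u hu => by simpa using hu
  have hne : ∀ u ∈ sphere (0 : Euc (m+1)) 1, u ≠ 0 := by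
    rintro u hu rfl; simp at hu
  let F : Euc (m+1) × Euc (m+1) → ℝ≥0∞ := fun a => ENNReal.ofReal (G a.1 ^ q)
  have hF : Continuous F := by
    refine ENNReal.continuous_ofReal.comp ?_
    exact (hG.comp continuous_fst).rpow_const fun a => Or.inl (hGp _).ne'
  have hFt : ∀ a, F a < ∞ := fun a => ENNReal.ofReal_lt_top
  have hFG : ∀ x u, F (x, u) = ENNReal.ofReal (G x) ^ q := fun x u =>
    (ENNReal.ofReal_rpow_of_pos (hGp x)).symm
  have hmeas : AEMeasurable (gaussMapInv K) σ := gaussMapInv_aemeas hK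
  have hA : ∫⁻ x, ENNReal.ofReal (g x) ^ q ∂(Measure.map (gaussMapInv K) σ) =
      ∫⁻ u, F (gaussMapInv K u, u) ∂σ := by
    have h1 : ∀ᵐ x ∂(Measure.map (gaussMapInv K) σ), x ∈ frontier K := by
      refine (ae_map_iff (p := fun x => x ∈ frontier K) hmeas isClosed_frontier.measurableSet).2 ?_
      filter_upwards [hs] with u hu
      exact (gaussMapInv_spec hK (hne u hu)).1
    have h2 : ∫⁻ x, ENNReal.ofReal (g x) ^ q ∂(Measure.map (gaussMapInv K) σ) =
        ∫⁻ x, ENNReal.ofReal (G x) ^ q ∂(Measure.map (gaussMapInv K) σ) := by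
      refine lintegral_congr_ae ?_
      filter_upwards [h1] with x hx
      rw [hg x hx]
    rw [h2, lintegral_map' (hG.measurable.ennreal_ofReal.pow_const q).aemeasurable hmeas]
    exact lintegral_congr fun u => (hFG _ u).symm
  rw [hA]
  have hP := fun k : ℕ => Pset_compact hK (1 / ((k:ℝ) + 1))
  have hPa : Antitone (fun k : ℕ => Pset K (1 / ((k:ℝ) + 1))) := fun k k' hk =>
    Pset_mono (one_div_le_one_div_of_le (by positivity) (by gcongr))
  constructor
  · refine lint_fin σ hσf F hF hFt _ (hP 0) _ ?_
    filter_upwards [hs] with u hu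
    have hsp := gaussMapInv_spec hK (hne u hu)
    have hmem : (gaussMapInv K u, u) ∈ Pset K (1 / (((0:ℕ):ℝ) + 1)) :=
      close_pair (close_self K (by positivity)) le_rfl (hK.frontier_subset hsp.1) (hs1 u hu) hsp.2
    exact ⟨(gaussMapInv K u, u), hmem, le_refl _⟩
  · intro b hb
    have hu : ∀ᵐ u ∂σ, ∀ a : Euc (m+1) × Euc (m+1), (∀ k : ℕ, a ∈ Pset K (1 / ((k:ℝ) + 1))) →
        a.2 = u → F a ≤ F (gaussMapInv K u, u) := by
      filter_upwards [hs, unique_supp hK] with u hu huniq a ha hau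
      obtain ⟨h1, h2, h3⟩ := Pset_inter hK ha
      have hsp := gaussMapInv_spec hK (hne u hu)
      rw [hau] at h3
      have := huniq _ h1 _ (hK.frontier_subset hsp.1) h3 hsp.2
      rw [← this]
    obtain ⟨k, hk⟩ := limit_lemma σ hσf F hF hFt Prod.snd continuous_snd _ hPa hP
      (fun u => F (gaussMapInv K u, u)) hu b hb
    · have hδ : (0:ℝ) < 1 / ((k:ℝ) + 1) := by positivity
      filter_upwards [close_eventually hconv hδ] with j hj
      refine lt_of_le_of_lt ((lintegral_map_le _ _).trans (lintegral_mono_ae ?_)) hk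
      filter_upwards [hs] with u hu
      have hsp := gaussMapInv_spec (hKseq j) (hne u hu)
      rw [← hFG _ u]
      refine le_supFn F Prod.snd _ _ u (gaussMapInv (Kseq j) u, u) ?_ (by simpa using hδ)
      exact close_pair hj le_rfl ((hKseq j).frontier_subset hsp.1) (hs1 u hu) hsp.2

lemma main_B {m : ℕ} {K : Set (Euc (m+1))} (hK : IsConvexBody K) (h0 : (0 : Euc (m+1)) ∈ interior K)
    {Kseq : ℕ → Set (Euc (m+1))} (hKseq : ∀ j, IsConvexBody (Kseq j))
    (hconv : Tendsto (fun j => hausdorffEDist (Kseq j) K) atTop (𝓝 0))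
    (G : Euc (m+1) → ℝ) (hG : Continuous G) (hGp : ∀ x, 0 < G x) (p q : ℝ) (g : Euc (m+1) → ℝ)
    (hg : ∀ x ∈ frontier K, G x = g x) :
    ∫⁻ x, ENNReal.ofReal (g x) ^ p * ENNReal.ofReal (suppFn K (gaussMap K x)) ^ q
      ∂(bdryMeasure (m+1) K) < ∞ ∧
    ∀ b, ∫⁻ x, ENNReal.ofReal (g x) ^ p * ENNReal.ofReal (suppFn K (gaussMap K x)) ^ q
      ∂(bdryMeasure (m+1) K) < b →
      ∀ᶠ j in atTop, ∫⁻ x, ENNReal.ofReal (G x) ^ p *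
        ENNReal.ofReal (suppFn (Kseq j) (gaussMap (Kseq j) x)) ^ q ∂(bdryMeasure (m+1) (Kseq j)) < b := by
  have hcast : (((m+1 : ℕ) : ℝ) - 1) = m := by push_cast; ring
  simp only [bdryMeasure, hcast]
  set μ := (Measure.hausdorffMeasure (m : ℝ)).restrict (frontier K) with hμ
  have hμf : μ univ < ∞ := by rw [hμ, Measure.restrict_apply_univ]; exact bdry_fin hK h0
  have hs : ∀ᵐ u ∂μ, u ∈ frontier K := ae_restrict_mem isClosed_frontier.measurableSet
  obtain ⟨R, hR0, hR⟩ := body_bound hK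
  obtain ⟨r, hr0', hr⟩ := body_ball h0
  have hr0 : (0:ℝ) < r := hr0'
  let F : Euc (m+1) × Euc (m+1) → ℝ≥0∞ := fun a =>
    ENNReal.ofReal (G a.1 ^ p * (max ⟪a.1, a.2⟫ ((r:ℝ)/2)) ^ q)
  have hF : Continuous F := by
    refine ENNReal.continuous_ofReal.comp (Continuous.mul ?_ ?_)
    · exact (hG.comp continuous_fst).rpow_const fun a => Or.inl (hGp _).ne'
    · have h1 : Continuous (fun a : Euc (m+1) × Euc (m+1) => max ⟪a.1, a.2⟫ ((r:ℝ)/2)) := by fun_prop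
      refine h1.rpow_const fun a => Or.inl (ne_of_gt (lt_max_of_lt_right (by positivity)))
  have hFt : ∀ a, F a < ∞ := fun a => ENNReal.ofReal_lt_top
  have hFG : ∀ L : Set (Euc (m+1)), IsConvexBody L → Close L K ((r:ℝ)/2) → ∀ x ∈ frontier L,
      ENNReal.ofReal (G x) ^ p * ENNReal.ofReal (suppFn L (gaussMap L x)) ^ q = F (x, gaussMap L x) := by
    intro L hL hcl x hx
    obtain ⟨h1, h2⟩ := gaussMap_spec hL hx
    have h3 := inner_pos_of_support hr hr0.le h1 (close_support hcl h1 h2.2)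
    have h4 : (r:ℝ)/2 ≤ ⟪x, gaussMap L x⟫ := by linarith
    have h5 : 0 < ⟪x, gaussMap L x⟫ := by linarith
    simp only [F]
    rw [max_eq_left h4, suppFn_eq (hL.frontier_subset hx) h2.2, ENNReal.ofReal_rpow_of_pos (hGp x),
      ENNReal.ofReal_rpow_of_pos h5, ENNReal.ofReal_mul (Real.rpow_nonneg (hGp x).le _)]
  have hself : Close K K ((r:ℝ)/2) := close_self K (by positivity)
  have hB : ∫⁻ x, ENNReal.ofReal (g x) ^ p * ENNReal.ofReal (suppFn K (gaussMap K x)) ^ q ∂μ =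
      ∫⁻ x, F (x, gaussMap K x) ∂μ := by
    refine lintegral_congr_ae ?_
    filter_upwards [hs] with x hx
    rw [← hg x hx, hFG K hK hself x hx]
  rw [hB]
  have hP := fun k : ℕ => Pset_compact hK (1 / ((k:ℝ) + 1))
  have hPa : Antitone (fun k : ℕ => Pset K (1 / ((k:ℝ) + 1))) := fun k k' hk =>
    Pset_mono (one_div_le_one_div_of_le (by positivity) (by gcongr))
  constructor
  · refine lint_fin μ hμf F hF hFt _ (hP 0) _ ?_
    filter_upwards [hs] with x hx
    obtain ⟨h1, h2⟩ := gaussMap_spec hK hx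
    have hmem : (x, gaussMap K x) ∈ Pset K (1 / (((0:ℕ):ℝ) + 1)) :=
      close_pair (close_self K (by positivity)) le_rfl (hK.frontier_subset hx) h1 h2.2
    exact ⟨(x, gaussMap K x), hmem, le_refl _⟩
  · intro b hb
    have hu : ∀ᵐ y ∂μ, ∀ a : Euc (m+1) × Euc (m+1), (∀ k : ℕ, a ∈ Pset K (1 / ((k:ℝ) + 1))) →
        a.1 = y → F a ≤ F (y, gaussMap K y) := by
      filter_upwards [hs, unique_normal hK h0] with y hy huniq a ha hay
      obtain ⟨h1, h2, h3⟩ := Pset_inter hK ha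
      obtain ⟨h4, h5⟩ := gaussMap_spec hK hy
      rw [hay] at h3
      have := huniq _ _ h2 h4 h3 h5.2
      rw [← this, ← hay]
    obtain ⟨k, hk⟩ := limit_lemma μ hμf F hF hFt Prod.fst continuous_fst _ hPa hP
      (fun x => F (x, gaussMap K x)) hu b hb
    · set I := ∫⁻ y, supFn F Prod.fst (Pset K (1 / ((k:ℝ) + 1))) (1 / ((k:ℝ) + 1)) y ∂μ with hI
      have hδ : (0:ℝ) < 1 / ((k:ℝ) + 1) := by positivity
      set η := 1 / ((k:ℝ) + 1) with hη
      have ht1 : Tendsto (fun ε : ℝ≥0 => ((1 + ε : ℝ≥0) : ℝ≥0∞) ^ (m:ℝ) * I) (𝓝 0) (𝓝 I) := by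
        have hc : Continuous (fun ε : ℝ≥0 => ((1 + ε : ℝ≥0) : ℝ≥0∞) ^ (m:ℝ)) :=
          ENNReal.continuous_rpow_const.comp (ENNReal.continuous_coe.comp (by fun_prop))
        have := ENNReal.Tendsto.mul_const (b := I) (hc.tendsto 0) (Or.inr (ne_top_of_lt hk))
        simpa using this
      have ht2 : Tendsto (fun ε : ℝ≥0 => 2 * (ε:ℝ) * R) (𝓝 0) (𝓝 0) := by
        have hc : Continuous (fun ε : ℝ≥0 => 2 * (ε:ℝ) * R) := by fun_prop
        simpa using hc.tendsto 0
      have hev := ((ht1.eventually (gt_mem_nhds hk)).and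
        (ht2.eventually (gt_mem_nhds (by positivity : (0:ℝ) < η / 2)))).filter_mono
          (nhdsWithin_le_nhds (s := Ioi 0))
      obtain ⟨ε, ⟨hε1, hε2⟩, hε0'⟩ := (hev.and self_mem_nhdsWithin).exists
      have hε0 : (0:ℝ) < ε := hε0'
      set δ : ℝ := min (η / 3) (min (ε * r) (r / 2)) with hδdef
      have hδ0 : 0 < δ := by positivity
      have hδ1 : δ ≤ η / 3 := min_le_left _ _
      have hδ2 : δ ≤ ε * r := (min_le_right _ _).trans (min_le_left _ _)
      have hδ3 : δ ≤ r / 2 := (min_le_right _ _).trans (min_le_right _ _)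
      filter_upwards [close_eventually hconv hδ0] with j hj
      have hj' : Close (Kseq j) K ((r:ℝ)/2) :=
        ⟨fun x hx => (hj.1 x hx).imp fun y hy => ⟨hy.1, hy.2.trans hδ3⟩,
          fun x hx => (hj.2 x hx).imp fun y hy => ⟨hy.1, hy.2.trans hδ3⟩⟩
      obtain ⟨Φ, hΦm, hΦd, hΦ⟩ := bdry_dom hK h0 (hKseq j) ε (close_sub hK hr0 hr hε0 hδ2 hj) δ R hR hj.2
      refine lt_of_le_of_lt ?_ hε1
      let H : Euc (m+1) → ℝ≥0∞ := (frontier (Kseq j)).indicator (fun x => F (x, gaussMap (Kseq j) x))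
      calc ∫⁻ x, ENNReal.ofReal (G x) ^ p * ENNReal.ofReal (suppFn (Kseq j) (gaussMap (Kseq j) x)) ^ q
            ∂((Measure.hausdorffMeasure (m : ℝ)).restrict (frontier (Kseq j)))
          = ∫⁻ x, H x ∂((Measure.hausdorffMeasure (m : ℝ)).restrict (frontier (Kseq j))) := by
            refine lintegral_congr_ae ?_
            filter_upwards [ae_restrict_mem isClosed_frontier.measurableSet] with x hx
            rw [hFG _ (hKseq j) hj' x hx]
            simp only [H]
            rw [indicator_of_mem hx]
        _ ≤ ∫⁻ x, H x ∂(((1 + ε : ℝ≥0) : ℝ≥0∞) ^ (m:ℝ) • Measure.map Φ μ) :=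
            lintegral_mono' hΦ le_rfl
        _ = ((1 + ε : ℝ≥0) : ℝ≥0∞) ^ (m:ℝ) * ∫⁻ x, H x ∂(Measure.map Φ μ) := by
            rw [lintegral_smul_measure, smul_eq_mul]
        _ ≤ ((1 + ε : ℝ≥0) : ℝ≥0∞) ^ (m:ℝ) * I := by
            suffices hle : ∫⁻ x, H x ∂(Measure.map Φ μ) ≤ I by gcongr
            refine (lintegral_map_le H Φ).trans (lintegral_mono_ae ?_)
            filter_upwards [hs] with y hy
            by_cases hΦy : Φ y ∈ frontier (Kseq j)
            · simp only [H]
              rw [indicator_of_mem hΦy]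
              obtain ⟨h1, h2⟩ := gaussMap_spec (hKseq j) hΦy
              refine le_supFn F Prod.fst _ _ y (Φ y, gaussMap (Kseq j) (Φ y)) ?_ ?_
              · exact close_pair hj (by linarith) ((hKseq j).frontier_subset hΦy) h1 h2.2
              · have := hΦd y (hK.frontier_subset hy)
                simp only
                linarith
            · simp only [H]
              rw [indicator_of_notMem hΦy]
              exact bot_le

lemma tendsto_max_of {A : ℝ≥0∞} {Aj : ℕ → ℝ≥0∞} (h : ∀ b, A < b → ∀ᶠ j in atTop, Aj j < b) :
    Tendsto (fun j => max (Aj j) A) atTop (𝓝 A) := by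
  rw [tendsto_order]
  constructor
  · intro a ha
    exact Eventually.of_forall fun j => lt_max_of_lt_right ha
  · intro b hb
    filter_upwards [h b hb] with j hj
    exact max_lt hj hb

theorem statement12 (n : ℕ) (hn : 0 < n) (p : ℝ) (hp : 0 < p)
    (K : Set (Euc n)) (hK : IsConvexBody K) (h0 : (0 : Euc n) ∈ interior K)
    (Kseq : ℕ → Set (Euc n)) (hKseq : ∀ j, IsConvexBody (Kseq j))
    (h0seq : ∀ j, (0 : Euc n) ∈ interior (Kseq j))
    (hconv : Tendsto (fun j => EMetric.hausdorffEdist (Kseq j) K) atTop (𝓝 0)) :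
    Filter.limsup (fun j => lpASA n p (Kseq j)) atTop ≤ lpASA n p K := by
  obtain ⟨m, rfl⟩ : ∃ m, n = m + 1 := ⟨n - 1, by omega⟩
  refine le_sInf ?_
  rintro v ⟨g, hgc, hgp, rfl⟩
  obtain ⟨G, hG, hGp, hGg⟩ := extend_pos isClosed_frontier g hgc hgp
  have hconv' : Tendsto (fun j => hausdorffEDist (Kseq j) K) atTop (𝓝 0) := hconv
  obtain ⟨hA, hA'⟩ := main_A hK hKseq hconv' G hG hGp (-((m+1 : ℕ) : ℝ)) g hGg
  obtain ⟨hB, hB'⟩ := main_B hK h0 hKseq hconv' G hG hGp p (1 - p) g hGg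
  set A := ∫⁻ x, ENNReal.ofReal (g x) ^ (-((m+1 : ℕ) : ℝ)) ∂(curv0 (m+1) K)
  set B := ∫⁻ x, ENNReal.ofReal (g x) ^ p * ENNReal.ofReal (suppFn K (gaussMap K x)) ^ (1 - p)
    ∂(bdryMeasure (m+1) K)
  have tA := tendsto_max_of hA'
  have tB := tendsto_max_of hB'
  have hα : 0 ≤ p / (((m+1 : ℕ) : ℝ) + p) := by positivity
  have hβ : 0 ≤ ((m+1 : ℕ) : ℝ) / (((m+1 : ℕ) : ℝ) + p) := by positivity
  have tA2 := tA.ennrpow_const (p / (((m+1 : ℕ) : ℝ) + p))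
  have tB2 := tB.ennrpow_const (((m+1 : ℕ) : ℝ) / (((m+1 : ℕ) : ℝ) + p))
  have t := ENNReal.Tendsto.mul tA2 (Or.inr (ENNReal.rpow_ne_top_of_nonneg hβ hB.ne)) tB2
    (Or.inr (ENNReal.rpow_ne_top_of_nonneg hα hA.ne))
  rw [← t.limsup_eq]
  refine limsup_le_limsup (Eventually.of_forall fun j => ?_)
  refine le_trans (sInf_le ⟨G, hG.continuousOn, fun x _ => hGp x, rfl⟩) ?_
  exact mul_le_mul' (ENNReal.rpow_le_rpow (le_max_left _ _) hα)
    (ENNReal.rpow_le_rpow (le_max_left _ _) hβ)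

end
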